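/- For all primes p_1 < p_2 and every integer k ≥ 1, the integer n = p_1 · p_2^k is nice. -/

import Mathlib

/-- A congruence is a pair `(a, d)` representing `a (mod d)`, with residue `a : ℤ`
and modulus `d : ℕ`. Two congruences overlap if some integer satisfies both. -/
def Overlap (c₁ c₂ : ℤ × ℕ) : Prop :=
  ∃ x : ℤ, x ≡ c₁.1 [ZMOD (c₁.2 : ℤ)] ∧ x ≡ c₂.1 [ZMOD (c₂.2 : ℤ)]

/-- A set of congruences is good if any two distinct overlapping congruences in it
have coprime moduli. -/
def IsGood (A : Set (ℤ × ℕ)) : Prop :=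
  ∀ c₁ ∈ A, ∀ c₂ ∈ A, c₁ ≠ c₂ → Overlap c₁ c₂ → Nat.Coprime c₁.2 c₂.2

/-- A positive integer `n` is nice if there is a choice of residues `a d` for each
divisor `d > 1` of `n` such that `{a_d (mod d) : d ∣ n, d > 1}` is good. -/
def IsNice (n : ℕ) : Prop :=
  ∃ a : ℕ → ℤ, IsGood {c : ℤ × ℕ | ∃ d : ℕ, d ∣ n ∧ 1 < d ∧ c = (a d, d)}

/-!
Let `q` be prime, `m` coprime to `q`, and let `a` be good residues for the divisors of `m` with
every `a v` coprime to `v`. Keep `a v (mod v)` for `v ∣ m`, and give `u * q ^ (j + 1)` the residue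
`w u * q ^ j`, where the `w u` are multiples of `u` that are nonzero and distinct modulo `q`; such
multiples exist as soon as `m` has fewer than `q` divisors. Two of the new classes are disjoint
because an integer determines both its `q`-adic valuation and its lowest nonzero `q`-adic digit. If
a new class meets an old one, a common divisor of `u` and `v` divides `a v`, so `u` and `v` are
coprime. For `m` prime and `2 < q`, taking `a = 1` works.
-/

namespace Overlap

theorem symm {c₁ c₂ : ℤ × ℕ} (h : Overlap c₁ c₂) : Overlap c₂ c₁ :=
  let ⟨x, h₁, h₂⟩ := h
  ⟨x, h₂, h₁⟩

theorem modEq_of_dvd {c₁ c₂ : ℤ × ℕ} {g : ℕ} (h : Overlap c₁ c₂) (h₁ : g ∣ c₁.2)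
    (h₂ : g ∣ c₂.2) : c₁.1 ≡ c₂.1 [ZMOD g] := by
  obtain ⟨x, hx₁, hx₂⟩ := h
  exact (hx₁.of_dvd (Int.natCast_dvd_natCast.2 h₁)).symm.trans
    (hx₂.of_dvd (Int.natCast_dvd_natCast.2 h₂))

theorem coprime_of_isCoprime {r s : ℤ} {d u v : ℕ} (h : Overlap (r, d) (s, v))
    (hur : (u : ℤ) ∣ r) (hud : u ∣ d) (hs : IsCoprime s v) : u.Coprime v := by
  have hmod : r ≡ s [ZMOD (u.gcd v : ℕ)] :=
    h.modEq_of_dvd ((Nat.gcd_dvd_left u v).trans hud) (Nat.gcd_dvd_right u v)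
  have hgu : ((u.gcd v : ℕ) : ℤ) ∣ u := Int.natCast_dvd_natCast.2 (Nat.gcd_dvd_left u v)
  have hgv : ((u.gcd v : ℕ) : ℤ) ∣ v := Int.natCast_dvd_natCast.2 (Nat.gcd_dvd_right u v)
  have hgs : ((u.gcd v : ℕ) : ℤ) ∣ s := hmod.dvd_iff.1 (hgu.trans hur)
  exact Nat.isUnit_iff.1 (Int.ofNat_isUnit.1 (hs.isUnit_of_dvd' hgs hgv))

section PowerModuli

variable {c c' : ℤ} {q i j D D' : ℕ}

theorem exponent_le_of_not_dvd (h : Overlap (c * q ^ i, D) (c' * q ^ j, D')) (hq : q ≠ 0)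
    (hc : ¬ (q : ℤ) ∣ c) (hD : q ^ (i + 1) ∣ D) (hD' : q ^ (j + 1) ∣ D') : j ≤ i := by
  by_contra! hij
  have hmod : c * q ^ i ≡ c' * q ^ j [ZMOD (q : ℤ) ^ (i + 1)] := by
    exact_mod_cast h.modEq_of_dvd hD ((pow_dvd_pow q (by lia)).trans hD')
  have hdvd : (q : ℤ) ^ (i + 1) ∣ c * q ^ i :=
    hmod.dvd_iff.2 (dvd_mul_of_dvd_right (pow_dvd_pow _ hij) c')
  rw [pow_succ', mul_dvd_mul_iff_right (by positivity)] at hdvd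
  exact hc hdvd

theorem exponent_eq_and_modEq (h : Overlap (c * q ^ i, D) (c' * q ^ j, D')) (hq : q ≠ 0)
    (hc : ¬ (q : ℤ) ∣ c) (hc' : ¬ (q : ℤ) ∣ c') (hD : q ^ (i + 1) ∣ D)
    (hD' : q ^ (j + 1) ∣ D') : i = j ∧ c ≡ c' [ZMOD q] := by
  obtain rfl : i = j := le_antisymm (h.symm.exponent_le_of_not_dvd hq hc' hD' hD)
    (h.exponent_le_of_not_dvd hq hc hD hD')
  have hmod : c * q ^ i ≡ c' * q ^ i [ZMOD q * q ^ i] := by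
    simpa only [pow_succ', Nat.cast_mul, Nat.cast_pow] using h.modEq_of_dvd hD hD'
  exact ⟨rfl, Int.ModEq.mul_right_cancel' (by positivity) hmod⟩

end PowerModuli

end Overlap

/-- The congruences `a d (mod d)` for the divisors `d > 1` of `n`, so that `IsNice n` asks for
residues `a` making `divisorCongruences a n` good. -/
def divisorCongruences (a : ℕ → ℤ) (n : ℕ) : Set (ℤ × ℕ) :=
  {c : ℤ × ℕ | ∃ d : ℕ, d ∣ n ∧ 1 < d ∧ c = (a d, d)}

theorem isGood_divisorCongruences_iff {a : ℕ → ℤ} {n : ℕ} (hn : n ≠ 0) :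
    IsGood (divisorCongruences a n) ↔
      ∀ d, d ∣ n → ∀ e, e ∣ n → d ≠ e → Overlap (a d, d) (a e, e) → d.Coprime e := by
  constructor
  · intro h d hd e he hde hov
    rcases (Nat.succ_le_of_lt (Nat.pos_of_dvd_of_pos hd hn.bot_lt)).eq_or_lt with rfl | hd₁
    · exact Nat.coprime_one_left e
    rcases (Nat.succ_le_of_lt (Nat.pos_of_dvd_of_pos he hn.bot_lt)).eq_or_lt with rfl | he₁
    · exact Nat.coprime_one_right d
    exact h _ ⟨d, hd, hd₁, rfl⟩ _ ⟨e, he, he₁, rfl⟩ (fun heq ↦ hde (congrArg Prod.snd heq)) hov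
  · rintro h _ ⟨d, hd, -, rfl⟩ _ ⟨e, he, -, rfl⟩ hne hov
    exact h d hd e he (by rintro rfl; exact hne rfl) hov

theorem exists_distinct_nonzero_multiples_mod_prime {S : Finset ℕ} {q : ℕ} (hq : q.Prime)
    (hS : ∀ u ∈ S, u.Coprime q) (hcard : S.card < q) :
    ∃ t : ℕ → ℤ, (∀ u ∈ S, ¬ (q : ℤ) ∣ t u * u) ∧
      ∀ u ∈ S, ∀ v ∈ S, t u * u ≡ t v * v [ZMOD q] → u = v := by
  have : Fact q.Prime := ⟨hq⟩
  obtain ⟨f⟩ : Nonempty (S ↪ (ZMod q)ˣ) := by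
    apply Function.Embedding.nonempty_of_card_le
    rw [Fintype.card_coe, ZMod.card_units]
    lia
  have hmult : ∀ u : ℕ, ∃ t : ℤ, ∀ hu : u ∈ S, ((t * u : ℤ) : ZMod q) = f ⟨u, hu⟩ := by
    intro u
    by_cases hu : u ∈ S
    · have hu₀ : (u : ZMod q) ≠ 0 := ((ZMod.isUnit_iff_coprime u q).2 (hS u hu)).ne_zero
      obtain ⟨t, ht⟩ := ZMod.intCast_surjective ((f ⟨u, hu⟩ : ZMod q) * (u : ZMod q)⁻¹)
      exact ⟨t, fun _ ↦ by rw [Int.cast_mul, ht, Int.cast_natCast, inv_mul_cancel_right₀ hu₀]⟩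
    · exact ⟨0, fun h ↦ absurd h hu⟩
  choose t ht using hmult
  refine ⟨t, fun u hu hdvd ↦ ?_, fun u hu v hv huv ↦ ?_⟩
  · rw [← ZMod.intCast_zmod_eq_zero_iff_dvd, ht u hu] at hdvd
    exact Units.ne_zero _ hdvd
  · rw [← ZMod.intCast_eq_intCast_iff, ht u hu, ht v hv] at huv
    exact congrArg Subtype.val (f.injective (Units.ext huv))

/-- Extends residues `a` for the divisors of `m` to the divisors of `m * q ^ k`, for `q` prime to
`m`. A divisor divisible by `q` has the form `d = u * q ^ (j + 1)` with `u = d.gcd m`; its residue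
`t u * (d / q) = t u * u * q ^ j` is `0` modulo `u`, and the multipliers `t` are to be chosen so
that its lowest nonzero `q`-adic digit determines `u`. -/
def extendResidues (a t : ℕ → ℤ) (m q d : ℕ) : ℤ :=
  if q ∣ d then t (d.gcd m) * (d / q : ℕ) else a d

section ExtendResidues

variable {a t : ℕ → ℤ} {m q u : ℕ}

theorem extendResidues_of_dvd (hq : q ≠ 1) (hmq : m.Coprime q) (hu : u ∣ m) :
    extendResidues a t m q u = a u :=
  if_neg fun hqu ↦ hq (Nat.eq_one_of_dvd_coprimes hmq (hqu.trans hu) dvd_rfl)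

theorem extendResidues_mul_pow_succ (hq : q ≠ 0) (hmq : m.Coprime q) (hu : u ∣ m) (j : ℕ) :
    extendResidues a t m q (u * q ^ (j + 1)) = t u * u * q ^ j := by
  have hgcd : (u * q ^ (j + 1)).gcd m = u := by
    rw [Nat.Coprime.gcd_mul_right_cancel u (hmq.symm.pow_left _), Nat.gcd_eq_left hu]
  have hdiv : u * q ^ (j + 1) / q = u * q ^ j := by
    rw [pow_succ, ← mul_assoc, Nat.mul_div_cancel _ (by lia)]
  rw [extendResidues, if_pos (dvd_mul_of_dvd_right (dvd_pow_self q j.succ_ne_zero) u), hgcd, hdiv]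
  push_cast
  ring

end ExtendResidues

theorem isNice_mul_prime_pow {a : ℕ → ℤ} {m q : ℕ} (ha : IsGood (divisorCongruences a m))
    (hcop : ∀ v, v ∣ m → IsCoprime (a v) v) (hq : q.Prime) (hmq : m.Coprime q)
    (hcard : m.divisors.card < q) (k : ℕ) : IsNice (m * q ^ k) := by
  have hm : m ≠ 0 := by
    rintro rfl
    exact hq.ne_one ((Nat.coprime_zero_left q).1 hmq)
  have mem_divisors {u : ℕ} (hu : u ∣ m) : u ∈ m.divisors := Nat.mem_divisors.2 ⟨hu, hm⟩
  obtain ⟨t, ht₀, ht⟩ := exists_distinct_nonzero_multiples_mod_prime hq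
    (fun u hu ↦ Nat.Coprime.coprime_dvd_left (Nat.dvd_of_mem_divisors hu) hmq) hcard
  refine ⟨extendResidues a t m q,
    (isGood_divisorCongruences_iff (mul_ne_zero hm (pow_ne_zero k hq.ne_zero))).2 ?_⟩
  have coprime_of_overlap_old {u v j : ℕ} (hv : v ∣ m)
      (hov : Overlap (t u * u * q ^ j, u * q ^ (j + 1)) (a v, v)) :
      (u * q ^ (j + 1)).Coprime v :=
    (hov.coprime_of_isCoprime ((dvd_mul_left _ _).mul_right _) (dvd_mul_right u _)
      (hcop v hv)).mul_left ((Nat.Coprime.coprime_dvd_left hv hmq).symm.pow_left _)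
  intro d hd e he hde hov
  obtain ⟨u, _, hu, hqi, rfl⟩ := exists_dvd_and_dvd_of_dvd_mul hd
  obtain ⟨v, _, hv, hqj, rfl⟩ := exists_dvd_and_dvd_of_dvd_mul he
  obtain ⟨i, -, rfl⟩ := (Nat.dvd_prime_pow hq).1 hqi
  obtain ⟨j, -, rfl⟩ := (Nat.dvd_prime_pow hq).1 hqj
  rcases i with _ | i <;> rcases j with _ | j <;>
    simp only [pow_zero, mul_one, extendResidues_of_dvd hq.ne_one hmq hu,
      extendResidues_of_dvd hq.ne_one hmq hv, extendResidues_mul_pow_succ hq.ne_zero hmq hu,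
      extendResidues_mul_pow_succ hq.ne_zero hmq hv] at hde hov ⊢
  · exact (isGood_divisorCongruences_iff hm).1 ha u hu v hv hde hov
  · exact (coprime_of_overlap_old hu hov.symm).symm
  · exact coprime_of_overlap_old hv hov
  · obtain ⟨rfl, huv⟩ := hov.exponent_eq_and_modEq hq.ne_zero (ht₀ u (mem_divisors hu))
      (ht₀ v (mem_divisors hv)) (dvd_mul_left _ u) (dvd_mul_left _ v)
    exact absurd (by rw [ht u (mem_divisors hu) v (mem_divisors hv) huv]) hde

theorem primeTimesPrimePow_nice_general (p q k : ℕ) (hp : p.Prime) (hq : q.Prime) (hpq : p ≠ q)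
    (hq2 : q ≠ 2) : IsNice (p * q ^ k) := by
  have hgood : IsGood (divisorCongruences (fun _ ↦ 1) p) := by
    refine (isGood_divisorCongruences_iff hp.ne_zero).2 fun d hd e he hde _ ↦ ?_
    rcases (Nat.dvd_prime hp).1 hd with rfl | rfl
    · exact Nat.coprime_one_left e
    · rcases (Nat.dvd_prime hp).1 he with rfl | rfl
      · exact Nat.coprime_one_right d
      · exact absurd rfl hde
  have hcard : p.divisors.card < q := by
    rw [hp.divisors, Finset.card_pair hp.ne_one.symm]
    exact lt_of_le_of_ne hq.two_le hq2.symm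
  exact isNice_mul_prime_pow hgood (fun _ _ ↦ isCoprime_one_left) hq
    ((Nat.coprime_primes hp hq).2 hpq) hcard k

theorem primeTimesPrimePow_nice (p₁ p₂ k : ℕ) (hp₁ : p₁.Prime) (hp₂ : p₂.Prime)
    (hlt : p₁ < p₂) (hk : 1 ≤ k) : IsNice (p₁ * p₂ ^ k) :=
  primeTimesPrimePow_nice_general p₁ p₂ k hp₁ hp₂ hlt.ne (hp₁.two_le.trans_lt hlt).ne'
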